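/- Assume that ξ₁(t) := ∂_ε x(t,ε)|_{ε=0} is bounded on ℝ. Then ξ₁ satisfies the inhomogeneous linear ODE ξ̇₁(t) = A ξ₁(t) + f̃₁(0,t) for all t ∈ ℝ, and consequently ξ₁(t) = ∫_{−∞}^{t} e^{A(t−τ)} f̃₁(0,τ) dτ for all t ∈ ℝ, the improper integral being convergent. -/

import Mathlib

open MeasureTheory

/-- The action of the matrix exponential `e^{tA}` on a vector of `EuclideanSpace ℝ (Fin n)`. -/
noncomputable def expAct {n : ℕ} (A : Matrix (Fin n) (Fin n) ℝ) (t : ℝ)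
    (v : EuclideanSpace ℝ (Fin n)) : EuclideanSpace ℝ (Fin n) :=
  Matrix.toEuclideanLin (NormedSpace.exp (t • A)) v

/-! Since `x` is `C²` up to the boundary `ε = 0`, its mixed second derivatives agree there, so `ξ₁`
solves the `ε`-derivative of the equation at `ε = 0`. Along the zero solution `Df₀` vanishes and the
factor `ε` freezes the perturbation at its value at `0`, which leaves `ξ̇₁ = A ξ₁ + f̃₁(0, t)`.

By spectral mapping, `e^A` has spectral radius less than one, so Gelfand's formula makes some power
`e^{kA}` a strict contraction; hence `e^{tA}` decays exponentially. Finally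
`d/dτ [e^{(t-τ)A} ξ₁(τ)] = e^{(t-τ)A} f̃₁(0, τ)`, and boundedness of `ξ₁` makes the boundary term at
`-∞` vanish. -/

open Filter Topology NormedSpace

section SpectralMapping

theorem spectrum_coe_centralizer {𝕜 A : Type*} [CommRing 𝕜] [Ring A] [Algebra 𝕜 A] (s : Set A)
    (z : Subalgebra.centralizer 𝕜 s) : spectrum 𝕜 (z : A) = spectrum 𝕜 z := by
  have isUnit_coe_iff (w : Subalgebra.centralizer 𝕜 s) : IsUnit (w : A) ↔ IsUnit w := by
    refine ⟨fun ⟨u, hu⟩ ↦ ?_, fun hw ↦ hw.map (Subalgebra.centralizer 𝕜 s).val⟩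
    have inv_mem : (↑u⁻¹ : A) ∈ Subalgebra.centralizer 𝕜 s := fun y hy ↦
      Commute.units_inv_right (hu ▸ w.2 y hy : Commute y u)
    exact isUnit_iff_exists.2 ⟨⟨↑u⁻¹, inv_mem⟩, Subtype.ext (by simp [← hu]),
      Subtype.ext (by simp [← hu])⟩
  ext μ
  simp only [spectrum.mem_iff, ← isUnit_coe_iff]
  rfl

theorem spectrum_exp_of_comm {A : Type*} [NormedCommRing A] [NormedAlgebra ℂ A] [CompleteSpace A]
    (a : A) : spectrum ℂ (exp a) = Complex.exp '' spectrum ℂ a := by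
  let : NormedAlgebra ℚ A := .restrictScalars ℚ ℂ A
  have map_exp_character (φ : WeakDual.characterSpace ℂ A) : φ (exp a) = Complex.exp (φ a) := by
    rw [map_exp φ (map_continuous φ) a, Complex.exp_eq_exp_ℂ]
  ext μ
  simp [WeakDual.CharacterSpace.mem_spectrum_iff_exists, map_exp_character]

variable {A : Type*} [NormedRing A] [NormedAlgebra ℂ A] [CompleteSpace A]

/- The bicommutant of `a` is a commutative Banach algebra in which `a` has the same spectrum, so
Gelfand theory applies there. -/
theorem spectrum_exp (a : A) : spectrum ℂ (exp a) = Complex.exp '' spectrum ℂ a := by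
  let Z := Subalgebra.centralizer ℂ ({a} : Set A).centralizer
  have comm : ∀ x ∈ Z, ∀ y ∈ Z, x * y = y * x :=
    Set.centralizer_centralizer_comm_of_comm (by simp)
  let : NormedCommRing Z := { (inferInstance : NormedRing Z) with
    mul_comm x y := Subtype.ext (comm x x.2 y y.2) }
  have : CompleteSpace Z := (Set.isClosed_centralizer _).completeSpace_coe
  let b : Z := ⟨a, Set.subset_centralizer_centralizer rfl⟩
  have coe_exp : (exp b : Z) = exp (b : A) := by
    let : NormedAlgebra ℚ A := .restrictScalars ℚ ℂ A
    let : NormedAlgebra ℚ Z := .restrictScalars ℚ ℂ Z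
    exact map_exp Z.val continuous_subtype_val b
  calc
    spectrum ℂ (exp (b : A)) = spectrum ℂ (exp b) := by rw [← coe_exp, spectrum_coe_centralizer]
    _ = Complex.exp '' spectrum ℂ b := spectrum_exp_of_comm b
    _ = Complex.exp '' spectrum ℂ (b : A) := by rw [spectrum_coe_centralizer]

theorem exists_norm_pow_lt_one_of_spectrum {a : A} (ha : ∀ μ ∈ spectrum ℂ a, ‖μ‖ < 1) :
    ∃ k : ℕ, 0 < k ∧ ‖a ^ k‖ < 1 := by
  rcases subsingleton_or_nontrivial A with _ | _
  · exact ⟨1, one_pos, by simp [Subsingleton.elim (a ^ 1) 0]⟩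
  have radius_lt : spectralRadius ℂ a < (1 : NNReal) :=
    spectrum.spectralRadius_lt_of_forall_lt a ha
  obtain ⟨k, hk, k_pos⟩ := ((spectrum.gelfand_formula a).eventually_lt_const radius_lt |>.and
    (eventually_gt_atTop 0)).exists
  refine ⟨k, k_pos, ?_⟩
  contrapose! hk
  exact ENNReal.one_le_rpow (by exact_mod_cast hk) (by positivity)

end SpectralMapping

section ExponentialStability

theorem exp_add_smul {R : Type*} [NormedRing R] [NormedAlgebra ℝ R] [CompleteSpace R] (a : R)
    (s t : ℝ) : exp ((s + t) • a) = exp (s • a) * exp (t • a) := by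
  let : NormedAlgebra ℚ R := .restrictScalars ℚ ℝ R
  rw [add_smul, exp_add_of_commute (((Commute.refl a).smul_left s).smul_right t)]

theorem continuous_exp_smul {R : Type*} [NormedRing R] [NormedAlgebra ℝ R] [CompleteSpace R]
    (a : R) : Continuous fun t : ℝ ↦ exp (t • a) :=
  continuous_iff_continuousAt.2 fun t ↦ (hasDerivAt_exp_smul_const a t).continuousAt

theorem map_exp_smul_of_finiteDimensional {R S : Type*} [NormedRing R] [NormedAlgebra ℝ R]
    [FiniteDimensional ℝ R] [NormedRing S] [NormedAlgebra ℝ S] (f : R →ₐ[ℝ] S) (a : R) (t : ℝ) :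
    f (exp (t • a)) = exp (t • f a) := by
  have : CompleteSpace R := FiniteDimensional.complete ℝ R
  let : NormedAlgebra ℚ R := .restrictScalars ℚ ℝ R
  let : NormedAlgebra ℚ S := .restrictScalars ℚ ℝ S
  rw [map_exp f f.toLinearMap.continuous_of_finiteDimensional, map_smul]

/-- Exponential stability of the linear system `u' = a u`: the norm of its propagator `exp (t • a)`
decays exponentially as `t → ∞`. The constant `C` is existentially quantified together with the
rate `δ`, so the notion depends only on the topology of the algebra, not on its norm. -/
def IsExponentiallyStable {R : Type*} [NormedRing R] [NormedAlgebra ℝ R] (a : R) : Prop :=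
  ∃ C δ : ℝ, 0 < δ ∧ ∀ t : ℝ, 0 ≤ t → ‖exp (t • a)‖ ≤ C * Real.exp (-(δ * t))

namespace IsExponentiallyStable

theorem of_norm_exp_smul_lt_one {R : Type*} [NormedRing R] [NormedAlgebra ℝ R] [CompleteSpace R]
    {a : R} {T : ℝ} (hT : 0 < T) (h : ‖exp (T • a)‖ < 1) : IsExponentiallyStable a := by
  obtain ⟨q, hq, q_lt⟩ := exists_between h
  have q_pos : 0 < q := (norm_nonneg _).trans_lt hq
  obtain ⟨M, hM⟩ := (isCompact_Icc (a := 0) (b := T)).exists_bound_of_continuousOn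
    (continuous_exp_smul a).continuousOn
  have M_nonneg : 0 ≤ M := (norm_nonneg _).trans (hM 0 ⟨le_rfl, hT.le⟩)
  have periodic_bound (m : ℕ) (s : ℝ) (hs : s ∈ Set.Icc 0 T) :
      ‖exp ((s + m * T) • a)‖ ≤ M * q ^ m := by
    induction m with
    | zero => simpa using hM s hs
    | succ m ih =>
      calc ‖exp ((s + (m + 1 : ℕ) * T) • a)‖ = ‖exp ((s + m * T) • a) * exp (T • a)‖ := by
            rw [← exp_add_smul]; push_cast; ring_nf
        _ ≤ ‖exp ((s + m * T) • a)‖ * ‖exp (T • a)‖ := norm_mul_le _ _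
        _ ≤ M * q ^ m * q := by gcongr
        _ = M * q ^ (m + 1) := by ring
  refine ⟨M / q, -Real.log q / T, div_pos (neg_pos.2 (Real.log_neg q_pos q_lt)) hT, fun t ht ↦ ?_⟩
  let m := ⌊t / T⌋₊
  have m_le : m * T ≤ t := (le_div_iff₀ hT).1 (Nat.floor_le (by positivity))
  have lt_m : t / T - 1 < m := sub_lt_iff_lt_add.2 (Nat.lt_floor_add_one _)
  have lt_m_mul : t < (m + 1) * T := (div_lt_iff₀ hT).1 (Nat.lt_floor_add_one _)
  calc ‖exp (t • a)‖ = ‖exp (((t - m * T) + m * T) • a)‖ := by rw [sub_add_cancel]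
    _ ≤ M * q ^ m := periodic_bound m _ ⟨by linarith, by linarith⟩
    _ = M * q ^ (m : ℝ) := by rw [Real.rpow_natCast]
    _ ≤ M * q ^ (t / T - 1) := by
      gcongr ?_ * ?_
      exact Real.rpow_le_rpow_of_exponent_ge q_pos q_lt.le lt_m.le
    _ = M / q * Real.exp (-(-Real.log q / T * t)) := by
      rw [Real.rpow_sub_one q_pos.ne', Real.rpow_def_of_pos q_pos]
      ring_nf

theorem of_spectrum_re_neg {A : Type*} [NormedRing A] [NormedAlgebra ℂ A] [CompleteSpace A]
    {a : A} (ha : ∀ μ ∈ spectrum ℂ a, μ.re < 0) : IsExponentiallyStable a := by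
  have norm_lt_one : ∀ ν ∈ spectrum ℂ (exp a), ‖ν‖ < 1 := by
    rw [spectrum_exp]
    rintro _ ⟨μ, hμ, rfl⟩
    rw [Complex.norm_exp, Real.exp_lt_one_iff]
    exact ha μ hμ
  obtain ⟨k, k_pos, hk⟩ := exists_norm_pow_lt_one_of_spectrum norm_lt_one
  refine of_norm_exp_smul_lt_one (Nat.cast_pos.2 k_pos) ?_
  let : NormedAlgebra ℚ A := .restrictScalars ℚ ℂ A
  rwa [Nat.cast_smul_eq_nsmul, exp_nsmul]

theorem of_map_injective {R S : Type*} [NormedRing R] [NormedAlgebra ℝ R] [FiniteDimensional ℝ R]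
    [NormedRing S] [NormedAlgebra ℝ S] {f : R →ₐ[ℝ] S} (hf : Function.Injective f) {a : R}
    (ha : IsExponentiallyStable (f a)) : IsExponentiallyStable a := by
  obtain ⟨C, δ, δ_pos, hC⟩ := ha
  obtain ⟨K, -, hK⟩ := f.toLinearMap.exists_antilipschitzWith (LinearMap.ker_eq_bot.2 hf)
  refine ⟨K * C, δ, δ_pos, fun t ht ↦ ?_⟩
  calc ‖exp (t • a)‖ ≤ K * ‖f (exp (t • a))‖ := hK.le_mul_norm (map_zero f) _
    _ ≤ K * (C * Real.exp (-(δ * t))) := by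
      rw [map_exp_smul_of_finiteDimensional]
      gcongr
      exact hC t ht
    _ = K * C * Real.exp (-(δ * t)) := by ring

open scoped Matrix.Norms.L2Operator in
theorem toEuclideanCLM_of_spectrum_re_neg {ι : Type*} [Fintype ι] [DecidableEq ι]
    {A : Matrix ι ι ℝ} (hA : ∀ μ ∈ spectrum ℂ (A.map Complex.ofReal), μ.re < 0) :
    IsExponentiallyStable (Matrix.toEuclideanCLM (n := ι) (𝕜 := ℝ) A) := by
  let toMatrix : (EuclideanSpace ℝ ι →L[ℝ] EuclideanSpace ℝ ι) →ₐ[ℝ] Matrix ι ι ℝ :=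
    (Matrix.toEuclideanCLM (n := ι) (𝕜 := ℝ)).symm
  let complexify : Matrix ι ι ℝ →ₐ[ℝ] Matrix ι ι ℂ := Complex.ofRealAm.mapMatrix
  have injective : Function.Injective (complexify.comp toMatrix) :=
    (Matrix.map_injective Complex.ofReal_injective).comp
      (Matrix.toEuclideanCLM (n := ι) (𝕜 := ℝ)).symm.injective
  refine of_map_injective injective ?_
  have : complexify.comp toMatrix (Matrix.toEuclideanCLM (n := ι) (𝕜 := ℝ) A) =
      A.map Complex.ofReal := by simp [toMatrix, complexify]
  rw [this]
  exact of_spectrum_re_neg hA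

end IsExponentiallyStable

open scoped Matrix.Norms.L2Operator in
theorem expAct_eq_exp_toEuclideanCLM {n : ℕ} (A : Matrix (Fin n) (Fin n) ℝ) (t : ℝ)
    (v : EuclideanSpace ℝ (Fin n)) :
    expAct A t v = exp (t • Matrix.toEuclideanCLM (n := Fin n) (𝕜 := ℝ) A) v := by
  let toCLM : Matrix (Fin n) (Fin n) ℝ →ₐ[ℝ]
      EuclideanSpace ℝ (Fin n) →L[ℝ] EuclideanSpace ℝ (Fin n) :=
    Matrix.toEuclideanCLM (n := Fin n) (𝕜 := ℝ)
  exact DFunLike.congr_fun (map_exp_smul_of_finiteDimensional toCLM A t) v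

end ExponentialStability

section VariationOfConstants

variable {E : Type*} [NormedAddCommGroup E] [NormedSpace ℝ E] {L : E →L[ℝ] E}

theorem IsExponentiallyStable.exists_norm_exp_sub_smul_apply_le (hL : IsExponentiallyStable L)
    {w : ℝ → E} (hw : ∃ M : ℝ, ∀ τ, ‖w τ‖ ≤ M) (t : ℝ) :
    ∃ K δ : ℝ, 0 < δ ∧ ∀ τ ≤ t, ‖exp ((t - τ) • L) (w τ)‖ ≤ K * Real.exp (δ * τ) := by
  obtain ⟨C, δ, δ_pos, hC⟩ := hL
  obtain ⟨M, hM⟩ := hw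
  refine ⟨C * Real.exp (-(δ * t)) * M, δ, δ_pos, fun τ hτ ↦ ?_⟩
  calc
    ‖exp ((t - τ) • L) (w τ)‖ ≤ ‖exp ((t - τ) • L)‖ * ‖w τ‖ := ContinuousLinearMap.le_opNorm _ _
    _ ≤ C * Real.exp (-(δ * (t - τ))) * M :=
      mul_le_mul (hC _ (sub_nonneg.2 hτ)) (hM τ) (norm_nonneg _)
        ((norm_nonneg _).trans (hC _ (sub_nonneg.2 hτ)))
    _ = C * Real.exp (-(δ * t)) * M * Real.exp (δ * τ) := by
      rw [show -(δ * (t - τ)) = -(δ * t) + δ * τ by ring, Real.exp_add]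
      ring

theorem IsExponentiallyStable.tendsto_exp_sub_smul_apply_atBot (hL : IsExponentiallyStable L)
    {u : ℝ → E} (hu : ∃ M : ℝ, ∀ τ, ‖u τ‖ ≤ M) (t : ℝ) :
    Tendsto (fun τ ↦ exp ((t - τ) • L) (u τ)) atBot (𝓝 0) := by
  obtain ⟨K, δ, δ_pos, hK⟩ := hL.exists_norm_exp_sub_smul_apply_le hu t
  have bound_tendsto : Tendsto (fun τ ↦ K * Real.exp (δ * τ)) atBot (𝓝 0) := by
    simpa using (Real.tendsto_exp_atBot.comp (tendsto_id.const_mul_atBot δ_pos)).const_mul K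
  exact squeeze_zero_norm' (mem_of_superset (Iic_mem_atBot t) hK) bound_tendsto

variable [CompleteSpace E]

theorem hasDerivAt_exp_sub_smul_apply {u : ℝ → E} {v : E} {τ : ℝ}
    (hu : HasDerivAt u (L (u τ) + v) τ) (t : ℝ) :
    HasDerivAt (fun s ↦ exp ((t - s) • L) (u s)) (exp ((t - τ) • L) v) τ := by
  have exp_deriv : HasDerivAt (fun s : ℝ ↦ exp ((t - s) • L)) (-(exp ((t - τ) • L) * L)) τ := by
    simpa using! (hasDerivAt_exp_smul_const L (t - τ)).scomp τ ((hasDerivAt_id τ).const_sub t)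
  simpa using exp_deriv.clm_apply hu

theorem IsExponentiallyStable.integrableOn_exp_sub_smul_apply (hL : IsExponentiallyStable L)
    {g : ℝ → E} (hg : AEStronglyMeasurable g) (hg_bdd : ∃ M : ℝ, ∀ τ, ‖g τ‖ ≤ M) (t : ℝ) :
    IntegrableOn (fun τ ↦ exp ((t - τ) • L) (g τ)) (Set.Iic t) := by
  obtain ⟨K, δ, δ_pos, hK⟩ := hL.exists_norm_exp_sub_smul_apply_le hg_bdd t
  refine ((integrableOn_exp_mul_Iic δ_pos t).const_mul K).mono' ?_ ?_
  · have exp_cont : Continuous fun τ : ℝ ↦ exp ((t - τ) • L) :=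
      (continuous_exp_smul L).comp (continuous_sub_left t)
    exact (isBoundedBilinearMap_apply.continuous.comp_aestronglyMeasurable₂
      exp_cont.aestronglyMeasurable hg).restrict
  · filter_upwards [ae_restrict_mem measurableSet_Iic] with τ hτ using hK τ hτ

theorem aestronglyMeasurable_of_hasDerivAt_clm_add {u g : ℝ → E}
    (hu : ∀ t, HasDerivAt u (L (u t) + g t) t) : AEStronglyMeasurable g := by
  have g_eq : g = fun t ↦ deriv u t - L (u t) := by
    funext t
    rw [(hu t).deriv, add_sub_cancel_left]
  have u_cont : Continuous u := continuous_iff_continuousAt.2 fun t ↦ (hu t).continuousAt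
  rw [g_eq]
  exact (aestronglyMeasurable_deriv u _).sub (L.continuous.comp u_cont).aestronglyMeasurable

theorem IsExponentiallyStable.eq_integral_Iic_exp_sub_smul_apply (hL : IsExponentiallyStable L)
    {u g : ℝ → E} (hu : ∀ t, HasDerivAt u (L (u t) + g t) t)
    (hu_bdd : ∃ M : ℝ, ∀ t, ‖u t‖ ≤ M) {t : ℝ}
    (hg : IntegrableOn (fun τ ↦ exp ((t - τ) • L) (g τ)) (Set.Iic t)) :
    u t = ∫ τ in Set.Iic t, exp ((t - τ) • L) (g τ) := by
  rw [integral_Iic_of_hasDerivAt_of_tendsto' (fun τ _ ↦ hasDerivAt_exp_sub_smul_apply (hu τ) t) hg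
    (hL.tendsto_exp_sub_smul_apply_atBot hu_bdd t)]
  simp

end VariationOfConstants

section Linearization

variable {E : Type*} [NormedAddCommGroup E] [NormedSpace ℝ E]

theorem hasDerivAt_comp_mk_right {F : ℝ × ℝ → E} {F' : ℝ × ℝ →L[ℝ] E} {s : Set ℝ} {t e : ℝ}
    (he : e ∈ s) (hF : HasFDerivWithinAt F F' (Set.univ ×ˢ s) (t, e)) :
    HasDerivAt (fun r ↦ F (r, e)) (F' (1, 0)) t := by
  have line : HasDerivWithinAt (fun r : ℝ ↦ (r, e)) (1, 0) Set.univ t :=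
    ((hasDerivAt_id t).prodMk (hasDerivAt_const t e)).hasDerivWithinAt
  have maps_to : Set.MapsTo (fun r : ℝ ↦ (r, e)) Set.univ (Set.univ ×ˢ s) :=
    fun r _ ↦ ⟨trivial, he⟩
  exact (hF.comp_hasDerivWithinAt t line maps_to).hasDerivAt univ_mem

theorem hasDerivWithinAt_comp_mk_left {F : ℝ × ℝ → E} {F' : ℝ × ℝ →L[ℝ] E} {s : Set ℝ} {t e : ℝ}
    (hF : HasFDerivWithinAt F F' (Set.univ ×ˢ s) (t, e)) :
    HasDerivWithinAt (fun ε ↦ F (t, ε)) (F' (0, 1)) s e := by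
  have line : HasDerivWithinAt (fun ε : ℝ ↦ (t, ε)) (0, 1) s e :=
    ((hasDerivAt_const e t).prodMk (hasDerivAt_id e)).hasDerivWithinAt
  exact hF.comp_hasDerivWithinAt e line fun ε hε ↦ ⟨trivial, hε⟩

theorem hasDerivAt_derivWithin_comm {x : ℝ → ℝ → E} {v : ℝ → E} {w : E} {s : Set ℝ} {t e : ℝ}
    (hs : UniqueDiffOn ℝ s) (he : e ∈ s) (he' : e ∈ closure (interior s))
    (hx : ContDiffOn ℝ 2 (fun p : ℝ × ℝ ↦ x p.1 p.2) (Set.univ ×ˢ s))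
    (hv : ∀ ε ∈ s, HasDerivAt (fun r ↦ x r ε) (v ε) t) (hw : HasDerivWithinAt v w s e) :
    HasDerivAt (fun r ↦ derivWithin (x r) s e) w t := by
  let S : Set (ℝ × ℝ) := Set.univ ×ˢ s
  let D := fderivWithin ℝ (fun p : ℝ × ℝ ↦ x p.1 p.2) S
  let D₂ := fderivWithin ℝ D S (t, e)
  have hS : UniqueDiffOn ℝ S := uniqueDiffOn_univ.prod hs
  have hD (r : ℝ) {ε : ℝ} (hε : ε ∈ s) :
      HasFDerivWithinAt (fun p : ℝ × ℝ ↦ x p.1 p.2) (D (r, ε)) S (r, ε) :=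
    (hx.differentiableOn two_ne_zero (r, ε) ⟨trivial, hε⟩).hasFDerivWithinAt
  have hD₂ : HasFDerivWithinAt D D₂ S (t, e) :=
    ((hx.fderivWithin hS (m := 1) le_rfl).differentiableOn one_ne_zero (t, e)
      ⟨trivial, he⟩).hasFDerivWithinAt
  have symm : D₂ (1, 0) (0, 1) = D₂ (0, 1) (1, 0) := by
    have mem_closure : (t, e) ∈ closure (interior S) := by
      simpa [S, interior_prod_eq, closure_prod_eq] using he'
    exact (hx (t, e) ⟨trivial, he⟩).isSymmSndFDerivWithinAt (by simp) hS mem_closure ⟨trivial, he⟩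
      (1, 0) (0, 1)
  have param_deriv (r : ℝ) : derivWithin (x r) s e = D (r, e) (0, 1) :=
    (hasDerivWithinAt_comp_mk_left (hD r he)).derivWithin (hs e he)
  have time_deriv (ε : ℝ) (hε : ε ∈ s) : D (t, ε) (1, 0) = v ε :=
    (hasDerivAt_comp_mk_right hε (hD t hε)).unique (hv ε hε)
  have param_time_deriv : D₂ (0, 1) (1, 0) = w := by
    have : HasDerivWithinAt (fun ε ↦ D (t, ε) (1, 0)) (D₂ (0, 1) (1, 0)) s e := by
      simpa using (hasDerivWithinAt_comp_mk_left hD₂).clm_apply (hasDerivWithinAt_const e s (1, 0))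
    exact (hs e he).eq_deriv s this (hw.congr time_deriv (time_deriv e he))
  simp only [param_deriv, ← param_time_deriv, ← symm]
  simpa using (hasDerivAt_comp_mk_right he hD₂).clm_apply (hasDerivAt_const t ((0, 1) : ℝ × ℝ))

theorem hasDerivWithinAt_smul_zero {g : ℝ → E} {s : Set ℝ} (hg : ContinuousWithinAt g s 0) :
    HasDerivWithinAt (fun ε ↦ ε • g ε) (g 0) s 0 := by
  rw [hasDerivWithinAt_iff_tendsto_slope]
  refine (hg.tendsto.mono_left (nhdsWithin_mono 0 Set.sdiff_subset)).congr' ?_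
  filter_upwards [self_mem_nhdsWithin] with ε hε
  simp [slope, inv_smul_smul₀ (show ε ≠ 0 from hε.2)]

variable {L : E →L[ℝ] E} {f₀ : E → E}

theorem hasDerivWithinAt_perturbed_vectorField {f₁ : E → E} {y : ℝ → E} {y' : E} {s : Set ℝ}
    (hf₀ : HasFDerivAt f₀ (0 : E →L[ℝ] E) 0) (hf₁ : ContinuousAt f₁ 0) (hy0 : y 0 = 0)
    (hy : HasDerivWithinAt y y' s 0) :
    HasDerivWithinAt (fun ε ↦ L (y ε) + f₀ (y ε) + ε • f₁ (y ε)) (L y' + f₁ 0) s 0 := by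
  rw [← hy0] at hf₀ hf₁
  have linear_part : HasDerivWithinAt (fun ε ↦ L (y ε)) (L y') s 0 :=
    L.hasFDerivAt.comp_hasDerivWithinAt 0 hy
  have nonlinear_part : HasDerivWithinAt (fun ε ↦ f₀ (y ε)) 0 s 0 :=
    hf₀.comp_hasDerivWithinAt 0 hy
  have perturbation : HasDerivWithinAt (fun ε ↦ ε • f₁ (y ε)) (f₁ (y 0)) s 0 :=
    hasDerivWithinAt_smul_zero (hf₁.comp_continuousWithinAt hy.continuousWithinAt)
  simpa [hy0] using! (linear_part.add nonlinear_part).add perturbation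

theorem hasDerivAt_derivWithin_of_perturbed_ode {f₁ : E → ℝ → E} {x : ℝ → ℝ → E} {ε₀ : ℝ}
    (hε₀ : 0 < ε₀) (hf₀ : HasFDerivAt f₀ (0 : E →L[ℝ] E) 0)
    (hf₁ : ∀ t, ContinuousAt (fun y ↦ f₁ y t) 0)
    (hx : ContDiffOn ℝ 2 (fun p : ℝ × ℝ ↦ x p.1 p.2) (Set.univ ×ˢ Set.Ico 0 ε₀))
    (hsol : ∀ ε ∈ Set.Ico 0 ε₀, ∀ t, HasDerivAt (fun r ↦ x r ε)
      (L (x t ε) + f₀ (x t ε) + ε • f₁ (x t ε) t) t)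
    (hx0 : ∀ t, x t 0 = 0) (t : ℝ) :
    HasDerivAt (fun r ↦ derivWithin (x r) (Set.Ico 0 ε₀) 0)
      (L (derivWithin (x t) (Set.Ico 0 ε₀) 0) + f₁ 0 t) t := by
  have zero_mem : (0 : ℝ) ∈ Set.Ico 0 ε₀ := ⟨le_rfl, hε₀⟩
  have zero_mem_closure : (0 : ℝ) ∈ closure (interior (Set.Ico 0 ε₀)) := by
    simp [closure_Ioo hε₀.ne, hε₀.le]
  have x_deriv : HasDerivWithinAt (x t) (derivWithin (x t) (Set.Ico 0 ε₀) 0) (Set.Ico 0 ε₀) 0 :=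
    (hasDerivWithinAt_comp_mk_left (hx.differentiableOn two_ne_zero (t, 0)
      ⟨trivial, zero_mem⟩).hasFDerivWithinAt).differentiableWithinAt.hasDerivWithinAt
  exact hasDerivAt_derivWithin_comm (uniqueDiffOn_Ico 0 ε₀) zero_mem zero_mem_closure hx
    (fun ε hε ↦ hsol ε hε t)
    (hasDerivWithinAt_perturbed_vectorField hf₀ (hf₁ t) (hx0 t) x_deriv)

end Linearization

theorem stmt_6_general {E : Type*} [NormedAddCommGroup E] [NormedSpace ℝ E] [CompleteSpace E]
    {L : E →L[ℝ] E} (hL : IsExponentiallyStable L)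
    {f₀ : E → E} (hf₀ : HasFDerivAt f₀ (0 : E →L[ℝ] E) 0)
    {f₁ : E → ℝ → E} (hf₁ : ∀ t, ContinuousAt (fun y ↦ f₁ y t) 0)
    (hf₁_bdd : ∃ C : ℝ, ∀ t, ‖f₁ 0 t‖ ≤ C)
    {ε₀ : ℝ} (hε₀ : 0 < ε₀) {x : ℝ → ℝ → E}
    (hx : ContDiffOn ℝ 2 (fun p : ℝ × ℝ ↦ x p.1 p.2) (Set.univ ×ˢ Set.Ico 0 ε₀))
    (hsol : ∀ ε ∈ Set.Ico 0 ε₀, ∀ t, HasDerivAt (fun s ↦ x s ε)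
      (L (x t ε) + f₀ (x t ε) + ε • f₁ (x t ε) t) t)
    (hx0 : ∀ t, x t 0 = 0)
    (hbdd : ∃ C : ℝ, ∀ t, ‖derivWithin (x t) (Set.Ico 0 ε₀) 0‖ ≤ C) :
    (∀ t, HasDerivAt (fun s ↦ derivWithin (x s) (Set.Ico 0 ε₀) 0)
      (L (derivWithin (x t) (Set.Ico 0 ε₀) 0) + f₁ 0 t) t) ∧
    (∀ t, IntegrableOn (fun τ ↦ exp ((t - τ) • L) (f₁ 0 τ)) (Set.Iic t)) ∧
    (∀ t, derivWithin (x t) (Set.Ico 0 ε₀) 0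
      = ∫ τ in Set.Iic t, exp ((t - τ) • L) (f₁ 0 τ)) := by
  have ode := hasDerivAt_derivWithin_of_perturbed_ode hε₀ hf₀ hf₁ hx hsol hx0
  have integrable := hL.integrableOn_exp_sub_smul_apply
    (aestronglyMeasurable_of_hasDerivAt_clm_add ode) hf₁_bdd
  exact ⟨ode, integrable, fun t ↦ hL.eq_integral_Iic_exp_sub_smul_apply ode hbdd (integrable t)⟩

/-- let `A` have all eigenvalues with negative real part, `f₀` be `C¹` with
`f₀(0) = 0`, `Df₀(0) = 0`, `f̃₁` continuous with `sup_t |f̃₁(0,t)| < ∞`, and let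
`x : ℝ × [0,ε₀) → ℝⁿ` be a `C²` family with `x(·,ε)` solving `ẋ = Ax + f₀(x) + ε f̃₁(x,t)`
and `x(·,0) = 0`.  If `ξ₁(t) := ∂_ε x(t,ε)|_{ε=0}` is bounded on `ℝ`, then `ξ₁` solves
`ξ̇₁ = A ξ₁ + f̃₁(0,t)` and hence `ξ₁(t) = ∫_{-∞}^{t} e^{A(t−τ)} f̃₁(0,τ) dτ`, the improper
integral being convergent. -/
theorem stmt_6 {n : ℕ} (A : Matrix (Fin n) (Fin n) ℝ)
    (hspec : ∀ μ ∈ spectrum ℂ (A.map Complex.ofReal), μ.re < 0)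
    (f₀ : EuclideanSpace ℝ (Fin n) → EuclideanSpace ℝ (Fin n))
    (hf₀ : ContDiff ℝ 1 f₀) (hf₀0 : f₀ 0 = 0) (hDf₀0 : fderiv ℝ f₀ 0 = 0)
    (f₁ : EuclideanSpace ℝ (Fin n) → ℝ → EuclideanSpace ℝ (Fin n))
    (hf₁c : Continuous fun p : EuclideanSpace ℝ (Fin n) × ℝ => f₁ p.1 p.2)
    (hf₁b : ∃ C : ℝ, ∀ t : ℝ, ‖f₁ 0 t‖ ≤ C)
    (ε₀ : ℝ) (hε₀ : 0 < ε₀)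
    (x : ℝ → ℝ → EuclideanSpace ℝ (Fin n))
    (hxC2 : ContDiffOn ℝ 2 (fun p : ℝ × ℝ => x p.1 p.2) (Set.univ ×ˢ Set.Ico 0 ε₀))
    (hsol : ∀ ε ∈ Set.Ico (0 : ℝ) ε₀, ∀ t : ℝ, HasDerivAt (fun s => x s ε)
      (Matrix.toEuclideanLin A (x t ε) + f₀ (x t ε) + ε • f₁ (x t ε) t) t)
    (hx0 : ∀ t : ℝ, x t 0 = 0)
    (hbdd : ∃ C : ℝ, ∀ t : ℝ,
      ‖derivWithin (fun ε => x t ε) (Set.Ico 0 ε₀) 0‖ ≤ C) :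
    (∀ t : ℝ, HasDerivAt (fun s => derivWithin (fun ε => x s ε) (Set.Ico 0 ε₀) 0)
      (Matrix.toEuclideanLin A (derivWithin (fun ε => x t ε) (Set.Ico 0 ε₀) 0) + f₁ 0 t) t) ∧
    (∀ t : ℝ, IntegrableOn (fun τ => expAct A (t - τ) (f₁ 0 τ)) (Set.Iic t)) ∧
    (∀ t : ℝ, derivWithin (fun ε => x t ε) (Set.Ico 0 ε₀) 0
      = ∫ τ in Set.Iic t, expAct A (t - τ) (f₁ 0 τ)) := by
  have hf₀_deriv : HasFDerivAt f₀ 0 0 := hDf₀0 ▸ (hf₀.differentiable one_ne_zero 0).hasFDerivAt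
  have hf₁_cont (t : ℝ) : ContinuousAt (fun y ↦ f₁ y t) 0 := by fun_prop
  simp only [expAct_eq_exp_toEuclideanCLM]
  have stable := IsExponentiallyStable.toEuclideanCLM_of_spectrum_re_neg hspec
  obtain ⟨ode, integrable, formula⟩ :=
    stmt_6_general stable hf₀_deriv hf₁_cont hf₁b hε₀ hxC2 hsol hx0 hbdd
  exact ⟨ode, integrable, formula⟩
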